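/- arXiv:1809.00280 — 3 statements merged into one kernel-verified Lean document; each statement's English description precedes it below -/
import Mathlib

section
/- Suppose the base of an admissible word W of an S-machine S is Q_i Q_i^{-1} (respectively Q_i^{-1} Q_i), and consider a reduced computation starting with W ≡ q_i u q_i^{-1} (respectively q_i^{-1} u q_i), where u ≠ 1, and ending with W' ≡ q_i' u' (q_i')^{-1} (respectively W' ≡ (q_i')^{-1} u' q_i'). Suppose each rule θ of the computation has a part q_i → a_θ q_i' b_θ where b_θ (respectively a_θ) is a letter, and for different rules θ the letters b_θ (respectively a_θ) are different. Then the history of the computation has the form H_1 H_2^k H_3 where k ≥ 0, ||H_2|| ≤ min(||u||, ||u'||), ||H_1|| ≤ ||u||/2, and ||H_3|| ≤ ||u'||/2. -/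
namespace SConj

/-- Inverse letter. -/
def il {Y : Type} (x : Y × Bool) : Y × Bool := (x.1, !x.2)

theorem il_il {Y : Type} (x : Y × Bool) : il (il x) = x := by simp [il]

theorem rel_iff {Y : Type} (a b : Y × Bool) : (a.1 = b.1 → a.2 = b.2) ↔ b ≠ il a := by
  rcases a with ⟨a, i⟩
  rcases b with ⟨b, j⟩
  cases i <;> cases j <;> simp [il, eq_comm]

theorem isRed_iff {Y : Type} (w : List (Y × Bool)) :
    FreeGroup.IsReduced w ↔ w.IsChain (fun a b => b ≠ il a) := by
  unfold FreeGroup.IsReduced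
  simp only [rel_iff]

/-- Conjugation by one letter. -/
def cj {Y : Type} (g : FreeGroup Y) (x : Y × Bool) : FreeGroup Y :=
  FreeGroup.mk [x] * g * (FreeGroup.mk [x])⁻¹

theorem cj_mk {Y : Type} (w : List (Y × Bool)) (x : Y × Bool) :
    cj (FreeGroup.mk w) x = FreeGroup.mk (x :: w ++ [il x]) := by
  simp [cj, FreeGroup.inv_mk, FreeGroup.mul_mk, FreeGroup.invRev, il]

theorem mk_il {Y : Type} (x : Y × Bool) : FreeGroup.mk [il x] = (FreeGroup.mk [x])⁻¹ := by
  simp [FreeGroup.inv_mk, FreeGroup.invRev, il]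

theorem mk_cons {Y : Type} (x : Y × Bool) (w : List (Y × Bool)) :
    FreeGroup.mk (x :: w) = FreeGroup.mk [x] * FreeGroup.mk w := by
  simp [FreeGroup.mul_mk]

theorem cj_b {Y : Type} (v : List (Y × Bool)) (x : Y × Bool) :
    cj (FreeGroup.mk (il x :: v)) x = FreeGroup.mk (v ++ [il x]) := by
  rw [cj, mk_cons (il x), ← FreeGroup.mul_mk, mk_il]
  group

theorem cj_d {Y : Type} (v : List (Y × Bool)) (x : Y × Bool) :
    cj (FreeGroup.mk (il x :: (v ++ [x]))) x = FreeGroup.mk v := by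
  rw [cj, mk_cons (il x), ← FreeGroup.mul_mk, mk_il]
  group

theorem cj_inv {Y : Type} (g : FreeGroup Y) (x : Y × Bool) : cj g⁻¹ x = (cj g x)⁻¹ := by
  unfold cj; group

theorem foldl_inv {Y : Type} (l : List (Y × Bool)) (g : FreeGroup Y) :
    l.foldl cj g⁻¹ = (l.foldl cj g)⁻¹ := by
  induction l generalizing g with
  | nil => rfl
  | cons x l ih => simp only [List.foldl_cons, cj_inv, ih]

/-- Increasing phase. -/
theorem lemA {Y : Type} [DecidableEq Y] (l : List (Y × Bool)) :
    ∀ (w : List (Y × Bool)), w ≠ [] → FreeGroup.IsReduced w →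
      (∀ x ∈ l.head?, w.head? ≠ some (il x) ∧ w.getLast? ≠ some x) →
      l.IsChain (fun a b => b ≠ il a) →
      (l.foldl cj (FreeGroup.mk w)).toWord.length = w.length + 2 * l.length := by
  induction l with
  | nil =>
    intro w _ hw _ _
    simp [FreeGroup.toWord_mk, hw.reduce_eq]
  | cons x l ih =>
    intro w hne hw hx hl
    obtain ⟨h1, h2⟩ := hx x (by simp)
    rw [List.foldl_cons, cj_mk, ih]
    · simp; ring
    · simp
    · rw [isRed_iff] at hw ⊢
      rw [List.isChain_append, List.isChain_cons]
      refine ⟨⟨?_, hw⟩, by simp, ?_⟩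
      · rintro y hy rfl
        exact h1 hy
      · intro y hy z hz h
        simp at hz
        subst hz
        have : y = x := by
          have := congrArg il h
          rw [il_il, il_il] at this
          exact this.symm
        subst this
        rw [List.getLast?_cons] at hy
        cases hh : w.getLast? with
        | none => simp at hh; exact hne hh
        | some q => rw [hh] at hy; simp at hy; subst hy; exact h2 hh
    · intro y hy
      rw [List.isChain_cons] at hl
      have := hl.1 y hy
      constructor
      · intro h
        simp at h
        apply this
        rw [h, il_il]
      · intro h
        rw [List.getLast?_append] at h
        simp at h
        exact this h.symm
    · exact hl.tail

theorem red_head_last {Y : Type} {w : List (Y × Bool)} :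
    FreeGroup.IsCyclicallyReduced w ↔ FreeGroup.IsReduced w ∧
      ∀ a ∈ w.getLast?, ∀ b ∈ w.head?, b ≠ il a := by
  rw [FreeGroup.isCyclicallyReduced_iff]
  simp only [rel_iff]

theorem cyc_rot {Y : Type} {x : Y × Bool} {v : List (Y × Bool)}
    (h : FreeGroup.IsCyclicallyReduced (x :: v)) :
    FreeGroup.IsCyclicallyReduced (v ++ [x]) := by
  rw [red_head_last, isRed_iff] at *
  obtain ⟨h1, h2⟩ := h
  rw [List.isChain_cons] at h1
  constructor
  · rw [List.isChain_append]
    refine ⟨h1.2, by simp, ?_⟩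
    intro a ha b hb
    simp at hb
    subst hb
    apply h2 a _ x (by simp)
    rw [List.getLast?_cons]
    simp at ha
    simp [ha]
  · intro a ha b hb
    simp at ha
    subst ha
    cases v with
    | nil =>
      simp at hb
      subst hb
      exact h2 x (by simp) x (by simp)
    | cons y v =>
      simp at hb
      subst hb
      exact h1.1 y (by simp)

/-- Rotation phase. -/
theorem lemB {Y : Type} [DecidableEq Y] (l : List (Y × Bool)) :
    ∀ (w : List (Y × Bool)) (y : Y × Bool), w.getLast? = some (il y) →
      FreeGroup.IsCyclicallyReduced w →
      (y :: l).IsChain (fun a b => b ≠ il a) →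
      ∃ M E, l = M ++ E ∧ M <+: w.map il ++ M ∧
        (l.foldl cj (FreeGroup.mk w)).toWord.length = w.length + 2 * E.length := by
  induction l with
  | nil =>
    intro w y hy hw _
    refine ⟨[], [], by simp, by simp, ?_⟩
    simp [FreeGroup.toWord_mk, hw.isReduced.reduce_eq]
  | cons x l ih =>
    intro w y hy hw hl
    by_cases hx : w.head? = some (il x)
    · cases w with
      | nil => simp at hx
      | cons a v =>
        simp at hx
        subst hx
        obtain ⟨M, E, h1, h2, h3⟩ := ih (v ++ [il x]) x (by simp) (cyc_rot hw) hl.tail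
        refine ⟨x :: M, E, by simp [h1], ?_, ?_⟩
        · simp only [List.map_cons, List.cons_append, il_il, List.prefix_cons_inj]
          simpa [il_il] using h2
        · rw [List.foldl_cons, cj_b, h3]
          simp
    · refine ⟨[], x :: l, by simp, by simp, ?_⟩
      apply lemA
      · rintro rfl; simp at hy
      · exact hw.isReduced
      · intro z hz
        simp at hz
        subst hz
        refine ⟨hx, ?_⟩
        rw [hy]
        intro h
        simp at h
        simp at hl
        exact hl.1 h.symm
      · exact hl.tail

/-- Case of first step a rotation. -/
theorem lemB' {Y : Type} [DecidableEq Y] (l : List (Y × Bool)) (x : Y × Bool)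
    (v : List (Y × Bool)) (hw : FreeGroup.IsReduced (il x :: v))
    (hlast : (il x :: v).getLast? ≠ some x)
    (hl : (x :: l).IsChain (fun a b => b ≠ il a)) :
    ∃ M E, x :: l = M ++ E ∧ M.drop (v.length + 1) <+: M ∧
        ((x :: l).foldl cj (FreeGroup.mk (il x :: v))).toWord.length
          = v.length + 1 + 2 * E.length := by
  have hc : FreeGroup.IsCyclicallyReduced (il x :: v) := by
    rw [red_head_last]
    refine ⟨hw, ?_⟩
    intro a ha b hb h
    simp at hb
    subst hb
    have := congrArg il h
    rw [il_il, il_il] at this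
    subst this
    exact hlast ha
  obtain ⟨M, E, h1, h2, h3⟩ := lemB l (v ++ [il x]) x (by simp) (cyc_rot hc) hl
  refine ⟨x :: M, E, by simp [h1], ?_, ?_⟩
  · have h4 : x :: M <+: (x :: v.map il) ++ (x :: M) := by
      simp only [List.cons_append, List.prefix_cons_inj]
      simpa [il_il] using h2
    have := h4.drop (v.length + 1)
    rwa [List.drop_left' (by simp)] at this
  · rw [List.foldl_cons, cj_b, h3]
    simp

theorem main {Y : Type} [DecidableEq Y] (l : List (Y × Bool)) :
    ∀ (w : List (Y × Bool)), w ≠ [] → FreeGroup.IsReduced w →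
      l.IsChain (fun a b => b ≠ il a) →
      ∃ D M E m, l = D ++ M ++ E ∧ 0 < m ∧ M.drop m <+: M ∧ 2 * D.length + m ≤ w.length ∧
        2 * E.length + m ≤ (l.foldl cj (FreeGroup.mk w)).toWord.length := by
  induction l with
  | nil =>
    intro w hne hw _
    refine ⟨[], [], [], w.length, by simp, List.length_pos_iff.2 hne, by simp, by simp, ?_⟩
    simp [FreeGroup.toWord_mk, hw.reduce_eq]
  | cons x l ih =>
    intro w hne hw hl
    by_cases h1 : w.head? = some (il x)
    · cases w with
      | nil => simp at h1
      | cons a v =>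
        simp at h1
        subst h1
        by_cases h2 : (il x :: v).getLast? = some x
        · rcases List.eq_nil_or_concat' v with rfl | ⟨v, b, rfl⟩
          · simp [il] at h2
            rcases x with ⟨a, b⟩
            cases b <;> simp at h2
          · have : b = x := by
              rw [List.getLast?_cons] at h2
              simpa using h2
            subst this
            have hv : FreeGroup.IsReduced v := hw.infix ⟨[il b], [b], by simp⟩
            have hv0 : v ≠ [] := by
              rintro rfl
              rw [isRed_iff] at hw
              simp [il_il] at hw
            obtain ⟨D, M, E, m, e1, e2, e3, e4, e5⟩ := ih v hv0 hv hl.tail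
            refine ⟨b :: D, M, E, m, by simp [e1], e2, e3, by simp; omega, ?_⟩
            rw [List.foldl_cons, cj_d]
            exact e5
        · obtain ⟨M, E, e1, e2, e3⟩ := lemB' l x v hw h2 hl
          refine ⟨[], M, E, v.length + 1, by simpa using e1, by omega, e2, by simp, ?_⟩
          rw [e3]; omega
    · by_cases h2 : w.getLast? = some x
      · rcases List.eq_nil_or_concat' w with rfl | ⟨v, b, rfl⟩
        · simp at h2
        · simp at h2
          subst h2
          have hi : FreeGroup.invRev (v ++ [b]) = il b :: FreeGroup.invRev v := by
            simp [FreeGroup.invRev, il]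
          have hr : FreeGroup.IsReduced (il b :: FreeGroup.invRev v) := by
            rw [← hi]
            apply FreeGroup.IsReduced.of_reduce_eq
            rw [FreeGroup.reduce_invRev, hw.reduce_eq]
          have hlast : (il b :: FreeGroup.invRev v).getLast? ≠ some b := by
            rw [← hi]
            intro h
            apply h1
            simp only [FreeGroup.invRev, List.getLast?_reverse, List.head?_map] at h
            rw [Option.map_eq_some_iff] at h
            obtain ⟨q, hq, rfl⟩ := h
            rw [hq]
            simp [il]
          obtain ⟨M, E, e1, e2, e3⟩ := lemB' l b _ hr hlast hl
          rw [← hi, ← FreeGroup.inv_mk, foldl_inv, FreeGroup.toWord_inv] at e3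
          simp only [FreeGroup.invRev_length] at e3 e2
          refine ⟨[], M, E, v.length + 1, by simpa using e1, by omega, e2, by simp, ?_⟩
          rw [e3]; omega
      · refine ⟨[], [], x :: l, w.length, by simp, List.length_pos_iff.2 hne, by simp, by simp, ?_⟩
        rw [lemA (x :: l) w hne hw (by simpa using ⟨h1, h2⟩) hl]
        omega

theorem per1 {R : Type} (z : List R) (hz : z ≠ []) : ∀ (n : ℕ) (M : List R), M.length ≤ n →
    M <+: z ++ M → ∃ k P S, M = (List.replicate k z).flatten ++ P ∧ z = P ++ S ∧ S ≠ [] := by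
  intro n
  induction n with
  | zero =>
    intro M hM _
    have : M = [] := by simpa using hM
    subst this
    exact ⟨0, [], z, by simp, by simp, hz⟩
  | succ n ih =>
    intro M hM h
    have hzl := List.length_pos_iff.2 hz
    by_cases hl : M.length < z.length
    · obtain ⟨S, hS⟩ := List.prefix_of_prefix_length_le h (List.prefix_append z M) hl.le
      refine ⟨0, M, S, by simp, hS.symm, ?_⟩
      rintro rfl
      simp at hS
      subst hS
      omega
    · obtain ⟨M', rfl⟩ := List.prefix_of_prefix_length_le (List.prefix_append z M) h (by omega)
      rw [List.prefix_append_right_inj] at h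
      obtain ⟨k, P, S, e1, e2, e3⟩ := ih M' (by simp at hM; omega) h
      exact ⟨k + 1, P, S, by simp [List.replicate_succ, ← e1], e2, e3⟩

theorem rot {R : Type} (A B : List R) (k : ℕ) :
    (List.replicate k (A ++ B)).flatten ++ A = A ++ (List.replicate k (B ++ A)).flatten := by
  induction k with
  | zero => simp
  | succ k ih => simp only [List.replicate_succ, List.flatten_cons, List.append_assoc, ih]

theorem per2 {R : Type} (m : ℕ) (hm : 0 < m) (M : List R) (h : M.drop m <+: M) :
    ∃ P1 B P2 k, M = P1 ++ (List.replicate k B).flatten ++ P2 ∧ B.length ≤ m ∧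
      2 * P1.length ≤ m ∧ 2 * P2.length ≤ m := by
  by_cases hl : M.length < m
  · refine ⟨M.take (M.length / 2), [], M.drop (M.length / 2), 0, by simp, by simp, ?_, ?_⟩
    · simp; omega
    · simp; omega
  · have hz : (M.take m).length = m := by simp; omega
    have hp : M <+: M.take m ++ M := by
      conv_lhs => rw [← List.take_append_drop m M]
      rwa [List.prefix_append_right_inj]
    obtain ⟨k, P, S, e1, e2, e3⟩ := per1 (M.take m)
      (by rw [← List.length_pos_iff]; omega) _ M le_rfl hp
    have hS := List.length_pos_iff.2 e3
    rw [e2] at hz e1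
    simp at hz
    have hP := List.take_append_drop (P.length / 2) P
    have l1 : (P.take (P.length / 2)).length = P.length / 2 := by simp; omega
    have l2 : (P.drop (P.length / 2)).length = P.length - P.length / 2 := by simp
    generalize P.take (P.length / 2) = P1 at *
    generalize P.drop (P.length / 2) = P2 at *
    refine ⟨P1, P2 ++ S ++ P1, P2, k, ?_, ?_, ?_, ?_⟩
    · rw [e1, ← rot, ← hP]
      simp
    · simp; omega
    · omega
    · omega

theorem fold_eq {Y R : Type} (c : R → Y × Bool) : ∀ (t : ℕ) (u : Fin (t + 1) → FreeGroup Y)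
    (hist : Fin t → R) (_ : ∀ i : Fin t, u i.succ = cj (u i.castSucc) (c (hist i))),
    u (Fin.last t) = ((List.ofFn hist).map c).foldl cj (u 0) := by
  intro t
  induction t with
  | zero => intro u hist _; simp
  | succ t ih =>
    intro u hist h
    have := ih (fun i => u i.succ) (fun i => hist i.succ) (fun i => by simpa using h i.succ)
    rw [List.ofFn_succ, List.map_cons, List.foldl_cons]
    have h0 := h 0
    simp only [Fin.castSucc_zero] at h0
    rw [← h0]
    simpa using this

theorem case1
    {Y R : Type} [DecidableEq Y]
    (c : R → Y × Bool) (hinj : Function.Injective c)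
    (inv : R → R) (hinv : ∀ r, c (inv r) = ((c r).1, !(c r).2))
    (t : ℕ) (u : Fin (t + 1) → FreeGroup Y) (hist : Fin t → R)
    (hu0 : u 0 ≠ 1)
    (hred : ∀ (i : ℕ) (hi : i + 1 < t),
      hist ⟨i + 1, hi⟩ ≠ inv (hist ⟨i, Nat.lt_of_succ_lt hi⟩))
    (hstep : ∀ i : Fin t, u i.succ = cj (u i.castSucc) (c (hist i))) :
    ∃ (H1 H2 H3 : List R) (k : ℕ),
      List.ofFn hist = H1 ++ (List.replicate k H2).flatten ++ H3 ∧
      H2.length ≤ min (u 0).toWord.length (u (Fin.last t)).toWord.length ∧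
      2 * H1.length ≤ (u 0).toWord.length ∧
      2 * H3.length ≤ (u (Fin.last t)).toWord.length := by
  have hch : ((List.ofFn hist).map c).IsChain (fun a b => b ≠ il a) := by
    rw [List.isChain_iff_getElem]
    intro i hi
    simp only [List.length_map, List.length_ofFn] at hi
    simp only [List.getElem_map, List.getElem_ofFn]
    intro h
    apply hred i hi
    apply hinj
    rw [hinv]
    exact h
  obtain ⟨D, M, E, m, e1, e2, e3, e4, e5⟩ := main _ (u 0).toWord
    (by simpa [FreeGroup.toWord_eq_nil_iff] using hu0) FreeGroup.isReduced_toWord hch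
  rw [FreeGroup.mk_toWord, ← fold_eq c t u hist hstep] at e5
  rw [List.map_eq_append_iff] at e1
  obtain ⟨A, E', e1, hA, rfl⟩ := e1
  rw [List.map_eq_append_iff] at hA
  obtain ⟨D', M', rfl, rfl, rfl⟩ := hA
  rw [← List.map_drop, List.prefix_map_iff_of_injective hinj] at e3
  obtain ⟨P1, B, P2, k, f1, f2, f3, f4⟩ := per2 m e2 M' e3
  simp only [List.length_map] at e4 e5
  refine ⟨D' ++ P1, B, P2 ++ E', k, ?_, ?_, ?_, ?_⟩
  · rw [e1, f1]; simp
  · rw [le_min_iff]; constructor <;> omega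
  · simp; omega
  · simp; omega

end SConj

/-- Lemma `gen2`.  A computation with base `Q_i Q_i⁻¹` (resp. `Q_i⁻¹ Q_i`) is modelled by
the evolution of the tape word `u` of the sector between the two mutually inverse state
letters: each rule `θ` with part `q_i → a_θ q_i' b_θ` conjugates `u` by the letter `b_θ`
(resp. by `a_θ⁻¹`), so `u ↦ c_θ u c_θ⁻¹` (resp. `u ↦ c_θ⁻¹ u c_θ`) where the letter
`c_θ ∈ Y × Bool` is assigned injectively to the rules (different rules have different
letters), rules come in mutually inverse pairs, and the computation is reduced.  The
conclusion is the decomposition `H ≡ H₁ H₂^k H₃` of the history with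
`‖H₂‖ ≤ min(‖u‖, ‖u'‖)`, `‖H₁‖ ≤ ‖u‖/2` and `‖H₃‖ ≤ ‖u'‖/2`. -/
theorem sMachine_sector_conjugation
    {Y R : Type} [DecidableEq Y]
    (c : R → Y × Bool) (hinj : Function.Injective c)
    (inv : R → R) (hinv : ∀ r, c (inv r) = ((c r).1, !(c r).2))
    (t : ℕ) (u : Fin (t + 1) → FreeGroup Y) (hist : Fin t → R)
    (hu0 : u 0 ≠ 1)
    (hred : ∀ (i : ℕ) (hi : i + 1 < t),
      hist ⟨i + 1, hi⟩ ≠ inv (hist ⟨i, by omega⟩))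
    (hstep :
      (∀ i : Fin t, u i.succ =
        FreeGroup.mk [c (hist i)] * u i.castSucc * (FreeGroup.mk [c (hist i)])⁻¹) ∨
      (∀ i : Fin t, u i.succ =
        (FreeGroup.mk [c (hist i)])⁻¹ * u i.castSucc * FreeGroup.mk [c (hist i)])) :
    ∃ (H1 H2 H3 : List R) (k : ℕ),
      List.ofFn hist = H1 ++ (List.replicate k H2).flatten ++ H3 ∧
      H2.length ≤ min (u 0).toWord.length (u (Fin.last t)).toWord.length ∧
      2 * H1.length ≤ (u 0).toWord.length ∧
      2 * H3.length ≤ (u (Fin.last t)).toWord.length := by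
  rcases hstep with h | h
  · exact SConj.case1 c hinj inv hinv t u hist hu0 hred h
  · refine SConj.case1 (fun r => SConj.il (c r)) ?_ inv ?_ t u hist hu0 hred ?_
    · intro a b hab
      apply hinj
      have := congrArg SConj.il hab
      simpa only [SConj.il_il] using this
    · intro r
      simp [SConj.il, hinv]
    · intro i
      rw [h i, SConj.cj, SConj.mk_il, inv_inv]
end

section
/- Let C: W_0 → … → W_t be a reduced computation of the S-machine LR(Y) with the standard base Q^{(1)} P Q^{(2)} such that W_0 ≡ q^{(1)} u p^{(1)} q^{(2)} and W_t ≡ q^{(1)} v p^{(2)} q^{(2)} for some words u, v. Then u ≡ v; |W_i|_Y = |W_0|_Y for every i = 0, …, t; t = 2k + 1 where k = |W_0|_Y; the Q^{(1)}P-sector is locked in the transition W_k → W_{k+1}; and the history H of C is a copy of the word ū ζ^{(12)} (ū')^{-1}, where ū is the mirror image of u and ū' is the corresponding copy of ū. In particular, W_0, W_t and H uniquely determine each other. -/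
namespace LR

/-- The rules of the `S`-machine `LR(Y)`: `z1 a = ζ⁽¹⁾(a)`, `z12 = ζ⁽¹²⁾` and
`z2 a = ζ⁽²⁾(a)`.  A signed rule `(r, ε) : LRRule Y × Bool` is the rule `r` if
`ε = true` and its inverse if `ε = false`. -/
inductive LRRule (Y : Type) : Type
  | z1 : Y → LRRule Y
  | z12 : LRRule Y
  | z2 : Y → LRRule Y

/-- A configuration of `LR(Y)` with the standard base `Q⁽¹⁾ P Q⁽²⁾`:
`st = false` means the running state letter is `p⁽¹⁾`, `st = true` means it is `p⁽²⁾`;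
`uL` is the tape word of the `Q⁽¹⁾P`-sector (a reduced word in `Y⁽¹⁾`, identified
with `Y`), and `uR` is the tape word of the `PQ⁽²⁾`-sector (a reduced word in `Y⁽²⁾`,
identified with `Y` via `a ↦ a'`). -/
structure Config (Y : Type) where
  st : Bool
  uL : FreeGroup Y
  uR : FreeGroup Y

variable {Y : Type}

/-- the `Y`-length `|W|_Y` of a configuration -/
def lenY [DecidableEq Y] (W : Config Y) : ℕ :=
  W.uL.toWord.length + W.uR.toWord.length

/-- One application of a (signed) rule of `LR(Y)`. -/
def Step (r : LRRule Y × Bool) (W W' : Config Y) : Prop :=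
  match r with
  | (LRRule.z1 a, true) => W.st = false ∧ W'.st = false ∧
      W'.uL = W.uL * (FreeGroup.of a)⁻¹ ∧ W'.uR = FreeGroup.of a * W.uR
  | (LRRule.z1 a, false) => W.st = false ∧ W'.st = false ∧
      W'.uL = W.uL * FreeGroup.of a ∧ W'.uR = (FreeGroup.of a)⁻¹ * W.uR
  | (LRRule.z12, true) => W.st = false ∧ W.uL = 1 ∧
      W'.st = true ∧ W'.uL = 1 ∧ W'.uR = W.uR
  | (LRRule.z12, false) => W.st = true ∧ W.uL = 1 ∧
      W'.st = false ∧ W'.uL = 1 ∧ W'.uR = W.uR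
  | (LRRule.z2 a, true) => W.st = true ∧ W'.st = true ∧
      W'.uL = W.uL * FreeGroup.of a ∧ W'.uR = (FreeGroup.of a)⁻¹ * W.uR
  | (LRRule.z2 a, false) => W.st = true ∧ W'.st = true ∧
      W'.uL = W.uL * (FreeGroup.of a)⁻¹ ∧ W'.uR = FreeGroup.of a * W.uR

end LR

namespace LR

theorem step_z1 {Y : Type} {a : Y} {e : Bool} {W W' : Config Y}
    (h : Step (LRRule.z1 a, e) W W') :
    W.st = false ∧ W'.st = false ∧ W'.uL = W.uL * (FreeGroup.mk [(a, e)])⁻¹ ∧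
      W'.uR = FreeGroup.mk [(a, e)] * W.uR := by
  cases e
  · exact h
  · exact h

theorem step_z2 {Y : Type} {a : Y} {e : Bool} {W W' : Config Y}
    (h : Step (LRRule.z2 a, e) W W') :
    W.st = true ∧ W'.st = true ∧ W'.uL = W.uL * FreeGroup.mk [(a, e)] ∧
      W'.uR = (FreeGroup.mk [(a, e)])⁻¹ * W.uR := by
  cases e
  · exact h
  · exact h

theorem step_prod {Y : Type} {r : LRRule Y × Bool} {W W' : Config Y}
    (h : Step r W W') : W'.uL * W'.uR = W.uL * W.uR := by
  obtain ⟨r, e⟩ := r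
  cases r with
  | z1 a => obtain ⟨_, _, h1, h2⟩ := step_z1 h; rw [h1, h2]; group
  | z2 a => obtain ⟨_, _, h1, h2⟩ := step_z2 h; rw [h1, h2]; group
  | z12 =>
    cases e
    · obtain ⟨_, h1, _, h2, h3⟩ := h; rw [h1, h2, h3]
    · obtain ⟨_, h1, _, h2, h3⟩ := h; rw [h1, h2, h3]

theorem toWord_eq {Y : Type} [DecidableEq Y] {g : FreeGroup Y} {w : List (Y × Bool)}
    (hw : FreeGroup.IsReduced w) (h : g = FreeGroup.mk w) : g.toWord = w := by
  rw [h, FreeGroup.toWord_mk, hw.reduce_eq]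

theorem len_split {Y : Type} [DecidableEq Y] {g x y : FreeGroup Y} {v w : List (Y × Bool)}
    (hg : v ++ w = g.toWord) (hxy : x * y = g)
    (h : x = FreeGroup.mk v ∨ y = FreeGroup.mk w) :
    x.toWord.length + y.toWord.length = g.toWord.length := by
  have hr : FreeGroup.IsReduced (v ++ w) := hg ▸ FreeGroup.isReduced_toWord
  have hv : FreeGroup.IsReduced v := hr.infix ⟨[], w, by simp⟩
  have hw : FreeGroup.IsReduced w := hr.infix ⟨v, [], by simp⟩
  have hm : g = FreeGroup.mk v * FreeGroup.mk w := by
    rw [FreeGroup.mul_mk, hg, FreeGroup.mk_toWord]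
  have hx : x = FreeGroup.mk v ∧ y = FreeGroup.mk w := by
    rcases h with h | h
    · refine ⟨h, ?_⟩
      rw [hm, h] at hxy
      exact mul_left_cancel hxy
    · refine ⟨?_, h⟩
      rw [hm, h] at hxy
      exact mul_right_cancel hxy
  rw [toWord_eq hv hx.1, toWord_eq hw hx.2, ← hg, List.length_append]

/-- The map sending a letter to the corresponding rule of the first kind. -/
abbrev f1 {Y : Type} : Y × Bool → LRRule Y × Bool := fun l => (LRRule.z1 l.1, l.2)
/-- The map sending a letter to the corresponding rule of the second kind. -/
abbrev f2 {Y : Type} : Y × Bool → LRRule Y × Bool := fun l => (LRRule.z2 l.1, l.2)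

theorem f1_inj {Y : Type} : Function.Injective (f1 (Y := Y)) := by
  rintro ⟨a, b⟩ ⟨c, d⟩ h
  simpa [f1] using h

theorem f2_inj {Y : Type} : Function.Injective (f2 (Y := Y)) := by
  rintro ⟨a, b⟩ ⟨c, d⟩ h
  simpa [f2] using h

theorem prefix_phase1 {Y : Type} {u w : List (Y × Bool)} {T : List (LRRule Y × Bool)}
    (h : w.reverse.map f1 <+: u.reverse.map f1 ++ [(LRRule.z12, true)] ++ T) :
    ∃ v, v ++ w = u := by
  have hno : ((LRRule.z12, true) : LRRule Y × Bool) ∉ w.reverse.map f1 := by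
    simp [f1]
  have key : w.reverse.map f1 <+: u.reverse.map f1 := by
    rcases List.prefix_or_prefix_of_prefix h (List.prefix_append _ T) with h' | h'
    · rcases List.prefix_concat_iff.1 h' with h'' | h''
      · exact absurd (h'' ▸ by simp) hno
      · exact h''
    · exact absurd (h'.subset (by simp)) hno
  have k2 : w.reverse <+: u.reverse := (List.prefix_map_iff_of_injective f1_inj).1 key
  exact List.reverse_prefix.1 k2

/-- The invariant of a reduced computation. -/
def Inv {Y : Type} [DecidableEq Y] (g : FreeGroup Y) (W : Config Y)
    (H : List (LRRule Y × Bool)) (w : List (Y × Bool)) : Prop :=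
  (W.st = false ∧ W.uR = FreeGroup.mk w ∧ H = w.reverse.map f1) ∨
  (W.st = true ∧ W.uL = FreeGroup.mk w ∧
    H = g.toWord.reverse.map f1 ++ [(LRRule.z12, true)] ++ w.map f2)

theorem inv_step {Y : Type} [DecidableEq Y] {g : FreeGroup Y} {W W' : Config Y}
    {H : List (LRRule Y × Bool)} {w : List (Y × Bool)} {r : LRRule Y × Bool}
    (hw : FreeGroup.IsReduced w) (hI : Inv g W H w) (hg : W.uL * W.uR = g)
    (hs : Step r W W') (hr : ∀ l x, H = l ++ [x] → r ≠ (x.1, !x.2)) :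
    ∃ w', FreeGroup.IsReduced w' ∧ Inv g W' (H ++ [r]) w' := by
  obtain ⟨r, e⟩ := r
  rcases hI with ⟨hst, hR, hH⟩ | ⟨hst, hL, hH⟩
  · cases r with
    | z1 a =>
      obtain ⟨_, h2, h3, h4⟩ := step_z1 hs
      refine ⟨(a, e) :: w, ?_, Or.inl ⟨h2, ?_, ?_⟩⟩
      · cases w with
        | nil => exact FreeGroup.IsReduced.singleton
        | cons y w =>
          rw [FreeGroup.isReduced_cons_cons]
          refine ⟨fun hay => ?_, hw⟩
          have := hr (w.reverse.map f1) (f1 y) (by rw [hH]; simp)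
          obtain ⟨b, d⟩ := y
          simp only [f1] at hay this ⊢
          subst hay
          by_contra hne
          apply this
          cases e <;> cases d <;> simp_all
      · rw [h4, hR, FreeGroup.mul_mk]; rfl
      · rw [hH]; simp
    | z2 a => have := (step_z2 hs).1; simp_all
    | z12 =>
      cases e
      · have := hs.1; simp_all
      · obtain ⟨_, h1, h2, h3, h4⟩ := hs
        refine ⟨[], FreeGroup.IsReduced.nil, Or.inr ⟨h2, h3, ?_⟩⟩
        have : g.toWord = w := toWord_eq hw (by rw [← hg, h1, one_mul, hR])
        rw [this, hH]; simp
  · cases r with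
    | z1 a => have := (step_z1 hs).1; simp_all
    | z2 a =>
      obtain ⟨_, h2, h3, h4⟩ := step_z2 hs
      refine ⟨w ++ [(a, e)], ?_, Or.inr ⟨h2, ?_, ?_⟩⟩
      · rcases List.eq_nil_or_concat w with rfl | ⟨w0, y, rfl⟩
        · exact FreeGroup.IsReduced.singleton
        · rw [List.concat_eq_append] at *
          refine FreeGroup.IsReduced.append_overlap hw ?_ (by simp)
          change FreeGroup.IsReduced [y, (a, e)]
          rw [FreeGroup.isReduced_cons_cons]
          refine ⟨fun hay => ?_, FreeGroup.IsReduced.singleton⟩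
          have := hr (g.toWord.reverse.map f1 ++ [(LRRule.z12, true)] ++ w0.map f2) (f2 y)
            (by rw [hH]; simp)
          obtain ⟨b, d⟩ := y
          simp only [f2] at hay this ⊢
          subst hay
          by_contra hne
          apply this
          cases e <;> cases d <;> simp_all
      · rw [h3, hL, FreeGroup.mul_mk]
      · rw [hH]; simp
    | z12 =>
      cases e
      · obtain ⟨_, h1, _⟩ := hs
        have h5 : (1 : FreeGroup Y).toWord = w := toWord_eq hw (by rw [← h1, hL])
        rw [FreeGroup.toWord_one] at h5
        subst h5
        exact absurd rfl (hr (g.toWord.reverse.map f1) (LRRule.z12, true) (by rw [hH]; simp only [List.map_nil, List.append_nil]))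
      · have := hs.1; simp_all

end LR


open LR in
/-- Lemma `prim` (3): in a reduced computation of `LR(Y)` with the standard base starting
with `W₀ ≡ q⁽¹⁾ u p⁽¹⁾ q⁽²⁾` and ending with `W_t ≡ q⁽¹⁾ v p⁽²⁾ q⁽²⁾` one has `u ≡ v`,
all configurations have `Y`-length `|W₀|_Y`, `t = 2k + 1` with `k = |W₀|_Y`, the
`Q⁽¹⁾P`-sector is locked in the transition `W_k → W_{k+1}` (the rule applied there is
`ζ⁽¹²⁾`), and the history is a copy of `ū ζ⁽¹²⁾ (ū')⁻¹`, where `ū` is the mirror image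
of `u`; so `W₀`, `W_t` and `H` uniquely determine each other. -/
theorem lr_prim_locking {Y : Type} [DecidableEq Y]
    (t : ℕ) (W : Fin (t + 1) → Config Y) (hist : Fin t → LRRule Y × Bool)
    (hstep : ∀ i : Fin t, Step (hist i) (W i.castSucc) (W i.succ))
    (hred : ∀ (i : ℕ) (hi : i + 1 < t),
      hist ⟨i + 1, hi⟩ ≠ ((hist ⟨i, by omega⟩).1, !(hist ⟨i, by omega⟩).2))
    (h0 : (W 0).st = false ∧ (W 0).uR = 1)
    (ht : (W (Fin.last t)).st = true ∧ (W (Fin.last t)).uR = 1) :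
    (W (Fin.last t)).uL = (W 0).uL ∧
    (∀ i : Fin (t + 1), lenY (W i) = lenY (W 0)) ∧
    t = 2 * (W 0).uL.toWord.length + 1 ∧
    (∀ hk : (W 0).uL.toWord.length < t,
      hist ⟨(W 0).uL.toWord.length, hk⟩ = (LRRule.z12, true)) ∧
    List.ofFn hist =
      ((W 0).uL.toWord.reverse.map fun l => (LRRule.z1 l.1, l.2)) ++
        [(LRRule.z12, true)] ++
        ((W 0).uL.toWord.map fun l => (LRRule.z2 l.1, l.2)) := by
  have hprod : ∀ i : ℕ, ∀ hi : i < t + 1, (W ⟨i, hi⟩).uL * (W ⟨i, hi⟩).uR = (W 0).uL := by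
    intro i
    induction i with
    | zero => intro hi; change (W 0).uL * (W 0).uR = _; rw [h0.2, mul_one]
    | succ i ih =>
      intro hi
      rw [← ih (by omega)]
      exact step_prod (hstep ⟨i, by omega⟩)
  have hlen : (List.ofFn hist).length = t := List.length_ofFn
  have hinv : ∀ i : ℕ, ∀ hi : i < t + 1, ∃ w, FreeGroup.IsReduced w ∧
      Inv (W 0).uL (W ⟨i, hi⟩) ((List.ofFn hist).take i) w := by
    intro i
    induction i with
    | zero =>
      intro hi
      exact ⟨[], FreeGroup.IsReduced.nil, Or.inl ⟨h0.1, h0.2, by simp⟩⟩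
    | succ i ih =>
      intro hi
      obtain ⟨w, hw, hI⟩ := ih (by omega)
      have hs := hstep ⟨i, by omega⟩
      have := inv_step (r := hist ⟨i, by omega⟩) (W' := W ⟨i + 1, hi⟩) hw hI
        (hprod i (by omega)) hs ?_
      · rw [List.take_succ_eq_append_getElem (by omega), List.getElem_ofFn]
        exact this
      · intro l x hl
        have h1 := congrArg List.length hl
        rw [List.length_take, hlen, List.length_append, List.length_singleton] at h1
        have hil : i = l.length + 1 := by omega
        subst hil
        have hx : hist ⟨l.length, by omega⟩ = x := by
          have h2 : ((List.ofFn hist).take (l.length + 1))[l.length]? = some x := by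
            rw [hl]; simp
          rw [List.getElem?_take_of_lt (by omega),
            List.getElem?_eq_getElem (by omega), List.getElem_ofFn] at h2
          exact Option.some.inj h2
        rw [← hx]
        exact hred l.length (by omega)
  have hfin : (W (Fin.last t)).uL = (W 0).uL := by
    have := hprod t (by omega)
    change (W (Fin.last t)).uL * (W (Fin.last t)).uR = _ at this
    rwa [ht.2, mul_one] at this
  have hH : List.ofFn hist = (W 0).uL.toWord.reverse.map f1 ++ [(LRRule.z12, true)] ++
      (W 0).uL.toWord.map f2 := by
    obtain ⟨w, hw, hI⟩ := hinv t (by omega)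
    rw [List.take_of_length_le (by omega)] at hI
    change Inv _ (W (Fin.last t)) _ _ at hI
    rcases hI with ⟨h1, _⟩ | ⟨_, h2, h3⟩
    · rw [ht.1] at h1; cases h1
    · have h4 : (W 0).uL.toWord = w := toWord_eq hw (by rw [← hfin, h2])
      rw [← h4] at h3
      exact h3
  have htk : t = 2 * (W 0).uL.toWord.length + 1 := by
    have := congrArg List.length hH
    simp only [List.length_append, List.length_map, List.length_reverse,
      List.length_singleton, hlen] at this
    omega
  refine ⟨hfin, ?_, htk, ?_, hH⟩
  · intro i
    obtain ⟨i, hi⟩ := i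
    obtain ⟨w, hw, hI⟩ := hinv i hi
    have hpre := List.take_prefix i (List.ofFn hist)
    have h00 : lenY (W 0) = (W 0).uL.toWord.length := by
      unfold lenY; rw [h0.2]; simp
    rw [h00]
    rcases hI with ⟨_, h2, h3⟩ | ⟨_, h2, h3⟩
    · rw [h3, hH] at hpre
      obtain ⟨v, hv⟩ := prefix_phase1 hpre
      exact len_split hv (hprod i hi) (Or.inr h2)
    · rw [h3, hH, List.prefix_append_right_inj, List.prefix_map_iff_of_injective f2_inj] at hpre
      obtain ⟨v, hv⟩ := hpre
      exact len_split hv (hprod i hi) (Or.inl h2)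
  · intro hk
    have h2 : (List.ofFn hist)[(W 0).uL.toWord.length]? = some (LRRule.z12, true) := by
      rw [hH]; simp
    rw [List.getElem?_eq_getElem (by omega), List.getElem_ofFn] at h2
    exact Option.some.inj h2
end

section
/- Let F be a free group and let v_l, v_r, u_0 ∈ F. For j ≥ 0 set u_j = v_l^j u_0 v_r^j. Then for every k ≥ 0 and every j with 0 ≤ j ≤ k, the length of the reduced word representing u_j is at most ||v_l|| + ||v_r|| + ||u_0|| + ||u_k||, where ||g|| denotes the length of the reduced word representing g in the free generators. -/
namespace FGAux

variable {α : Type} [DecidableEq α]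

/-- Length of the common prefix. -/
def cp {β : Type} [DecidableEq β] : List β → List β → ℕ
  | a :: l, b :: m => if a = b then cp l m + 1 else 0
  | _, _ => 0

lemma cp_min {β : Type} [DecidableEq β] (x : List β) :
    ∀ y z : List β, min (cp x z) (cp y z) ≤ cp x y := by
  induction x with
  | nil => intro y z; simp [cp]
  | cons a x ih =>
    intro y z
    cases y with
    | nil => simp [cp]
    | cons b y =>
      cases z with
      | nil => simp [cp]
      | cons c z =>
        have := ih y z
        simp only [cp]
        split_ifs <;> simp_all

lemma length_cp (x : List (α × Bool)) : ∀ y : List (α × Bool),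
    FreeGroup.IsReduced x → FreeGroup.IsReduced y →
    (FreeGroup.mk x)⁻¹ * FreeGroup.mk y = FreeGroup.mk (FreeGroup.invRev x ++ y) →
    (FreeGroup.reduce (FreeGroup.invRev x ++ y)).length + 2 * cp x y = x.length + y.length := by
  induction x with
  | nil => intro y hx hy _; simp [cp, hy.reduce_eq, FreeGroup.invRev]
  | cons a x ih =>
    intro y hx hy _
    cases y with
    | nil =>
      have : FreeGroup.reduce (FreeGroup.invRev (a :: x)) = FreeGroup.invRev (a :: x) := by
        rw [FreeGroup.reduce_invRev, hx.reduce_eq]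
      simp [cp, this]
    | cons b y =>
      by_cases hab : a = b
      · subst hab
        have h := ih y (hx.infix (List.suffix_cons a x).isInfix)
          (hy.infix (List.suffix_cons a y).isInfix) (by simp)
        have e : FreeGroup.reduce (FreeGroup.invRev (a :: x) ++ a :: y)
            = FreeGroup.reduce (FreeGroup.invRev x ++ y) := by
          apply FreeGroup.reduce.sound
          rw [← FreeGroup.mul_mk, ← FreeGroup.mul_mk, ← FreeGroup.inv_mk, ← FreeGroup.inv_mk,
            ← List.singleton_append, ← List.singleton_append (l := y), ← FreeGroup.mul_mk,
            ← FreeGroup.mul_mk]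
          group
        simp only [cp, e, if_true, List.length_cons]
        omega
      · have e : FreeGroup.IsReduced (FreeGroup.invRev (a :: x) ++ b :: y) := by
          have hi : FreeGroup.IsReduced (FreeGroup.invRev (a :: x)) := by
            apply FreeGroup.IsReduced.of_reduce_eq
            rw [FreeGroup.reduce_invRev, hx.reduce_eq]
          refine List.IsChain.append hi hy ?_
          obtain ⟨a1, a2⟩ := a
          obtain ⟨b1, b2⟩ := b
          intro p hp q hq
          simp [FreeGroup.invRev] at hp hq
          subst hp hq
          intro h
          simp only at h
          subst h
          cases a2 <;> cases b2 <;> simp_all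
        simp [cp, e.reduce_eq, hab]

lemma norm_cp (x y : FreeGroup α) :
    (x⁻¹ * y).norm + 2 * cp x.toWord y.toWord = x.norm + y.norm := by
  have := length_cp x.toWord y.toWord FreeGroup.isReduced_toWord FreeGroup.isReduced_toWord
    (by simp)
  rw [← FreeGroup.toWord_inv, ← FreeGroup.toWord_mul] at this
  exact this

lemma four (x y z : FreeGroup α) :
    (x⁻¹ * y).norm + z.norm ≤ max ((x⁻¹ * z).norm + y.norm) ((y⁻¹ * z).norm + x.norm) := by
  have h1 := norm_cp x y
  have h2 := norm_cp x z
  have h3 := norm_cp y z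
  have h4 := cp_min x.toWord y.toWord z.toWord
  omega

lemma mid (b m : FreeGroup α) (hb : (b * b).norm = 2 * b.norm) :
    m.norm + b.norm ≤ max (b * m).norm (b⁻¹ * m).norm := by
  have := four b⁻¹ b m
  rw [inv_inv, FreeGroup.norm_inv_eq] at this
  omega

lemma midRight (e m : FreeGroup α) (he : (e * e).norm = 2 * e.norm) :
    m.norm + e.norm ≤ max (m * e).norm (m * e⁻¹).norm := by
  have := mid e m⁻¹ he
  rw [← FreeGroup.norm_inv_eq (x := e * m⁻¹), ← FreeGroup.norm_inv_eq (x := e⁻¹ * m⁻¹)] at this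
  simp only [mul_inv_rev, inv_inv, FreeGroup.norm_inv_eq] at this
  omega

lemma tri (x y z : FreeGroup α) (h : x = y * z) : x.norm ≤ y.norm + z.norm :=
  h ▸ FreeGroup.norm_mul_le y z

lemma convStep (b m e : FreeGroup α) (hb : (b * b).norm = 2 * b.norm)
    (he : (e * e).norm = 2 * e.norm) :
    2 * m.norm ≤ (b⁻¹ * m * e⁻¹).norm + (b * m * e).norm := by
  have h0 := mid b m hb
  have h1 := midRight e (b * m) he
  have h2 := midRight e (b⁻¹ * m) he
  have ib := FreeGroup.norm_inv_eq (x := b)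
  have ie := FreeGroup.norm_inv_eq (x := e)
  have ibb := FreeGroup.norm_inv_eq (x := b * b)
  have iee := FreeGroup.norm_inv_eq (x := e * e)
  have t1 := tri m (b⁻¹ * (b * m * e)) e⁻¹ (by group)
  have t1' := tri (b⁻¹ * (b * m * e)) b⁻¹ (b * m * e) rfl
  have t2 := tri m (b * (b⁻¹ * m * e⁻¹)) e (by group)
  have t2' := tri (b * (b⁻¹ * m * e⁻¹)) b (b⁻¹ * m * e⁻¹) rfl
  have t3 := tri (b * m * e⁻¹) (b * m * e) (e * e)⁻¹ (by group)
  have t4 := tri (b * m * e⁻¹) (b * b) (b⁻¹ * m * e⁻¹) (by group)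
  have t5 := tri (b⁻¹ * m * e) (b⁻¹ * m * e⁻¹) (e * e) (by group)
  have t6 := tri (b⁻¹ * m * e) (b * b)⁻¹ (b * m * e) (by group)
  omega

/-- A discretely convex sequence is bounded by the values at its ends. -/
lemma convex_max (f : ℕ → ℕ) (hf : ∀ n, 2 * f (n + 1) ≤ f n + f (n + 2)) (k j : ℕ)
    (hjk : j ≤ k) : f j ≤ max (f 0) (f k) := by
  by_cases h : f j ≤ f 0
  · exact le_max_of_le_left h
  · apply le_max_of_le_right
    have key : ∃ i, f i < f (i + 1) ∧ i < j := by
      by_contra! hc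
      apply h
      have : ∀ i, i ≤ j → f i ≤ f 0 := by
        intro i
        induction i with
        | zero => intro _; exact le_rfl
        | succ i ih =>
          intro hi
          have h1 := ih (by omega)
          have h2 : ¬ f i < f (i + 1) := fun h => by have := hc i h; omega
          omega
      exact this j le_rfl
    obtain ⟨i, hi, hij⟩ := key
    have mono : ∀ n, i ≤ n → f n < f (n + 1) := by
      intro n hn
      induction n, hn using Nat.le_induction with
      | base => exact hi
      | succ n _ ih =>
        have := hf n
        change f (n + 1) < f (n + 2)
        omega
    induction k, hjk using Nat.le_induction with
    | base => exact le_rfl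
    | succ n hn ih => have := mono n (by omega); omega

lemma decomp (v : FreeGroup α) : ∃ c b : FreeGroup α, v = c * b * c⁻¹ ∧
    (b * b).norm = 2 * b.norm ∧ 2 * c.norm ≤ v.norm := by
  have hL := FreeGroup.isReduced_toWord (x := v)
  have hr := FreeGroup.reduceCyclically.isCyclicallyReduced hL
  have hc := FreeGroup.reduceCyclically.conj_conjugator_reduceCyclically v.toWord
  set r := FreeGroup.reduceCyclically v.toWord
  set c := FreeGroup.reduceCyclically.conjugator v.toWord
  refine ⟨FreeGroup.mk c, FreeGroup.mk r, ?_, ?_, ?_⟩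
  · rw [FreeGroup.inv_mk, FreeGroup.mul_mk, FreeGroup.mul_mk, hc, FreeGroup.mk_toWord]
  · have h2 := (hr.flatten_replicate 2).isReduced
    simp only [List.replicate, List.flatten_cons, List.flatten_nil, List.append_nil] at h2
    rw [FreeGroup.mul_mk, FreeGroup.norm, FreeGroup.norm, FreeGroup.toWord_mk,
      FreeGroup.toWord_mk, h2.reduce_eq, hr.isReduced.reduce_eq]
    simp; omega
  · have h3 : (FreeGroup.mk c).norm ≤ c.length := FreeGroup.norm_mk_le
    have h4 := congrArg List.length hc
    simp at h4
    unfold FreeGroup.norm at *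
    omega

end FGAux

/-- OS04, Lemma 8.1: if `u_j = v_l^j * u_0 * v_r^j` in a free group, then for `0 ≤ j ≤ k`
the length of the reduced word representing `u_j` is at most
`‖v_l‖ + ‖v_r‖ + ‖u_0‖ + ‖u_k‖`. -/
theorem freeGroup_length_conj_power_le {α : Type} [DecidableEq α]
    (vl vr u0 : FreeGroup α) (k j : ℕ) (hjk : j ≤ k) :
    (vl ^ j * u0 * vr ^ j).toWord.length ≤
      vl.toWord.length + vr.toWord.length + u0.toWord.length +
        (vl ^ k * u0 * vr ^ k).toWord.length := by
  change (vl ^ j * u0 * vr ^ j).norm ≤ vl.norm + vr.norm + u0.norm + (vl ^ k * u0 * vr ^ k).norm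
  obtain ⟨c, b, hl, hb, hcl⟩ := FGAux.decomp vl
  obtain ⟨d, e, hr, he, hdr⟩ := FGAux.decomp vr
  have hu : ∀ n : ℕ, vl ^ n * u0 * vr ^ n = c * (b ^ n * (c⁻¹ * u0 * d) * e ^ n) * d⁻¹ := by
    intro n
    rw [hl, hr, conj_pow, conj_pow]
    group
  have ic := FreeGroup.norm_inv_eq (x := c)
  have idInv := FreeGroup.norm_inv_eq (x := d)
  have hm := FGAux.convex_max (fun n => (b ^ n * (c⁻¹ * u0 * d) * e ^ n).norm) (by
    intro n
    have := FGAux.convStep b (b ^ (n + 1) * (c⁻¹ * u0 * d) * e ^ (n + 1)) e hb he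
    have e1 : b⁻¹ * (b ^ (n + 1) * (c⁻¹ * u0 * d) * e ^ (n + 1)) * e⁻¹
        = b ^ n * (c⁻¹ * u0 * d) * e ^ n := by
      rw [pow_succ' b, pow_succ e]; group
    have e2 : b * (b ^ (n + 1) * (c⁻¹ * u0 * d) * e ^ (n + 1)) * e
        = b ^ (n + 2) * (c⁻¹ * u0 * d) * e ^ (n + 2) := by
      rw [pow_succ' b (n + 1), pow_succ e (n + 1)]; simp only [mul_assoc]
    rw [e1, e2] at this
    exact this) k j hjk
  simp only [pow_zero, one_mul, mul_one] at hm
  have s1 := FGAux.tri _ _ _ (hu j)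
  have s2 := FGAux.tri (c * (b ^ j * (c⁻¹ * u0 * d) * e ^ j)) _ _ rfl
  have s3 := FGAux.tri (c⁻¹ * u0 * d) _ _ rfl
  have s4 := FGAux.tri (c⁻¹ * u0) _ _ rfl
  have s5 := FGAux.tri (b ^ k * (c⁻¹ * u0 * d) * e ^ k) (c⁻¹ * (vl ^ k * u0 * vr ^ k)) d
    (by rw [hu k]; group)
  have s6 := FGAux.tri (c⁻¹ * (vl ^ k * u0 * vr ^ k)) _ _ rfl
  omega
end
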